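/- For any real numbers a₀ and a₁, there exists a C² function φ : ℝ → ℝ defined on all of ℝ with φ(0) = a₀ and φ'(0) = a₁ that satisfies the ordinary differential equation φ''(t) = (e^{φ(t)} / (2(1 + e^{φ(t)})²)) · t · φ'(t) for all t ∈ ℝ. -/

import Mathlib

open Real

/-- Auxiliary bounded vector field: with `v = φ + t ψ` and `ψ = t G(φ) / 2 - φ'`. -/
noncomputable def odeField (t : ℝ) (p : ℝ × ℝ) : ℝ × ℝ :=
  (t * Real.sigmoid (p.1 - t * p.2), Real.sigmoid (p.1 - t * p.2) / 2)

lemma sigmoid_abs_sub_le (x y : ℝ) : |Real.sigmoid x - Real.sigmoid y| ≤ |x - y| := by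
  have h : LipschitzWith 1 Real.sigmoid := by
    apply lipschitzWith_of_nnnorm_deriv_le differentiable_sigmoid
    intro x
    rw [← NNReal.coe_le_coe, coe_nnnorm, deriv_sigmoid]
    have h0 := Real.sigmoid_nonneg x
    have h1 := Real.sigmoid_le_one x
    simp only [NNReal.coe_one, Real.norm_eq_abs]
    rw [abs_of_nonneg (mul_nonneg h0 (by linarith))]
    nlinarith
  simpa [Real.dist_eq] using h.dist_le_mul x y

lemma odeField_lipschitz (T : NNReal) (hT : 1 ≤ T) (t : ℝ) (ht : |t| ≤ T) :
    LipschitzWith (T * (1 + T)) (odeField t) := by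
  have hT' : (1 : ℝ) ≤ T := by exact_mod_cast hT
  apply LipschitzWith.of_dist_le_mul
  intro p q
  have h1 : |p.1 - q.1| ≤ dist p q := by
    rw [Prod.dist_eq, Real.dist_eq]; exact le_max_left _ _
  have h2 : |p.2 - q.2| ≤ dist p q := by
    rw [Prod.dist_eq, Real.dist_eq, Real.dist_eq]; exact le_max_right _ _
  have hd : 0 ≤ dist p q := dist_nonneg
  have h3 := sigmoid_abs_sub_le (p.1 - t * p.2) (q.1 - t * q.2)
  have h4 : |(p.1 - t * p.2) - (q.1 - t * q.2)| ≤ (1 + T) * dist p q := by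
    have e : (p.1 - t * p.2) - (q.1 - t * q.2) = (p.1 - q.1) - t * (p.2 - q.2) := by ring
    rw [e]
    have := abs_sub (p.1 - q.1) (t * (p.2 - q.2))
    rw [abs_mul] at this
    have := mul_le_mul ht h2 (abs_nonneg _) (by positivity)
    linarith
  have h5 := h3.trans h4
  rw [Prod.dist_eq]
  simp only [odeField, Real.dist_eq, NNReal.coe_mul, NNReal.coe_add, NNReal.coe_one]
  apply max_le
  · rw [← mul_sub, abs_mul, mul_assoc]
    exact mul_le_mul ht h5 (abs_nonneg _) (by positivity)
  · rw [← sub_div, abs_div, abs_two]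
    have : 0 ≤ (1 + (T : ℝ)) * dist p q := by positivity
    nlinarith

lemma odeField_norm_le (T : NNReal) (hT : 1 ≤ T) (t : ℝ) (ht : |t| ≤ T) (p : ℝ × ℝ) :
    ‖odeField t p‖ ≤ T := by
  have hT' : (1 : ℝ) ≤ T := by exact_mod_cast hT
  have h0 := Real.sigmoid_nonneg (p.1 - t * p.2)
  have h1 := Real.sigmoid_le_one (p.1 - t * p.2)
  rw [Prod.norm_def]
  simp only [odeField, Real.norm_eq_abs]
  apply max_le
  · rw [abs_mul, abs_of_nonneg h0]
    nlinarith [abs_nonneg t]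
  · rw [abs_of_nonneg (by positivity)]
    linarith

lemma odeField_local (p : ℝ × ℝ) (n : ℕ) : ∃ γ : ℝ → ℝ × ℝ, γ 0 = p ∧
    ∀ t ∈ Set.Ioo (-((n : ℝ) + 1)) (n + 1), HasDerivAt γ (odeField t (γ t)) t := by
  have hn : (0 : ℝ) ≤ n := n.cast_nonneg
  let T : NNReal := n + 1
  have hT : 1 ≤ T := by simp [T]
  have hTc : (T : ℝ) = n + 1 := by simp [T]
  have hPL : IsPicardLindelof odeField
      (⟨0, by constructor <;> linarith⟩ : Set.Icc (-((n : ℝ) + 1)) (n + 1)) p (T * T) 0 T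
      (T * (1 + T)) := by
    refine ⟨?_, ?_, ?_, ?_⟩
    · intro t ht
      exact (odeField_lipschitz T hT t (by rw [hTc]; exact abs_le.2 ht)).lipschitzOnWith
    · intro x _
      have : Continuous (fun t => odeField t x) := by
        unfold odeField
        have := continuous_sigmoid
        fun_prop
      exact this.continuousOn
    · intro t ht x _
      exact odeField_norm_le T hT t (by rw [hTc]; exact abs_le.2 ht) x
    · simp [hTc]
  obtain ⟨γ, h0, h⟩ := hPL.exists_eq_forall_mem_Icc_hasDerivWithinAt₀
  refine ⟨γ, h0, fun t ht => ?_⟩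
  exact (h t (Set.Ioo_subset_Icc_self ht)).hasDerivAt (Icc_mem_nhds ht.1 ht.2)

lemma odeField_global (p : ℝ × ℝ) : ∃ γ : ℝ → ℝ × ℝ, γ 0 = p ∧
    ∀ t, HasDerivAt γ (odeField t (γ t)) t := by
  choose g g0 hg using odeField_local p
  have key : ∀ m n : ℕ, m ≤ n → Set.EqOn (g m) (g n) (Set.Ioo (-((m : ℝ) + 1)) (m + 1)) := by
    intro m n hmn
    have hm : (0 : ℝ) ≤ m := m.cast_nonneg
    have hmn' : (m : ℝ) ≤ n := by exact_mod_cast hmn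
    refine ODE_solution_unique_of_mem_Ioo (v := odeField) (s := fun _ => Set.univ) (t₀ := 0)
      (K := ((m : NNReal) + 1) * (1 + ((m : NNReal) + 1))) ?_ ⟨by linarith, by linarith⟩ ?_ ?_ ?_
    · intro t ht
      exact (odeField_lipschitz ((m : NNReal) + 1) (by simp) t
        (by push_cast; exact abs_le.2 ⟨ht.1.le, ht.2.le⟩)).lipschitzOnWith
    · exact fun t ht => ⟨hg m t ht, trivial⟩
    · exact fun t ht => ⟨hg n t ⟨by linarith [ht.1], by linarith [ht.2]⟩, trivial⟩
    · rw [g0, g0]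
  have key2 : ∀ (n : ℕ) (t : ℝ), t ∈ Set.Ioo (-((n : ℝ) + 1)) (n + 1) →
      g ⌈|t|⌉₊ t = g n t := by
    intro n t ht
    have h1 : |t| ≤ ⌈|t|⌉₊ := Nat.le_ceil _
    have h2 := abs_le.1 h1
    rcases le_total ⌈|t|⌉₊ n with h | h
    · exact key _ _ h ⟨by linarith, by linarith⟩
    · exact (key _ _ h ht).symm
  refine ⟨fun t => g ⌈|t|⌉₊ t, by simp [g0], fun t => ?_⟩
  have h2 := abs_le.1 (Nat.le_ceil |t|)
  have hm : t ∈ Set.Ioo (-((⌈|t|⌉₊ : ℝ) + 1)) (⌈|t|⌉₊ + 1) := ⟨by linarith, by linarith⟩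
  refine (hg _ t hm).congr_of_eventuallyEq ?_
  filter_upwards [Ioo_mem_nhds hm.1 hm.2] with s hs
  exact key2 _ s hs

theorem ode_global_existence (a₀ a₁ : ℝ) :
    ∃ φ : ℝ → ℝ, ContDiff ℝ 2 φ ∧ φ 0 = a₀ ∧ deriv φ 0 = a₁ ∧
      ∀ t : ℝ, deriv (deriv φ) t
        = (Real.exp (φ t) / (2 * (1 + Real.exp (φ t)) ^ 2)) * t * deriv φ t := by
  obtain ⟨γ, h0, h⟩ := odeField_global (a₀, -a₁)
  have hv : ∀ t, HasDerivAt (fun t => (γ t).1)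
      (t * Real.sigmoid ((γ t).1 - t * (γ t).2)) t := fun t => (h t).fst
  have hp : ∀ t, HasDerivAt (fun t => (γ t).2)
      (Real.sigmoid ((γ t).1 - t * (γ t).2) / 2) t := fun t => (h t).snd
  let φ : ℝ → ℝ := fun t => (γ t).1 - t * (γ t).2
  have hφ : ∀ t, HasDerivAt φ (t / 2 * Real.sigmoid (φ t) - (γ t).2) t := by
    intro t
    refine ((hv t).sub ((hasDerivAt_id t).mul (hp t))).congr_deriv ?_
    simp only [φ, id]
    ring
  have hd : deriv φ = fun t => t / 2 * Real.sigmoid (φ t) - (γ t).2 :=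
    funext fun t => (hφ t).deriv
  have hdd : ∀ t, HasDerivAt (deriv φ)
      ((Real.exp (φ t) / (2 * (1 + Real.exp (φ t)) ^ 2)) * t * deriv φ t) t := by
    intro t
    have hs := (Real.hasDerivAt_sigmoid (φ t)).comp t (hφ t)
    rw [hd]
    refine ((((hasDerivAt_id t).div_const 2).mul hs).sub (hp t)).congr_deriv ?_
    have e : Real.sigmoid (φ t) * (1 - Real.sigmoid (φ t))
        = Real.exp (φ t) / (1 + Real.exp (φ t)) ^ 2 := by
      rw [Real.sigmoid_def, Real.exp_neg]
      have := Real.exp_pos (φ t)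
      field_simp
      ring
    have e2 : Real.exp (φ t) / (2 * (1 + Real.exp (φ t)) ^ 2)
        = Real.sigmoid (φ t) * (1 - Real.sigmoid (φ t)) / 2 := by
      rw [e, div_div, mul_comm]
    rw [e2]
    simp only [Function.comp, id]
    change _ + _ - Real.sigmoid (φ t) / 2 = _
    ring
  have hφd : Differentiable ℝ φ := fun t => (hφ t).differentiableAt
  have hφdd : Differentiable ℝ (deriv φ) := fun t => (hdd t).differentiableAt
  have hdd' : deriv (deriv φ) = fun t =>
      (Real.exp (φ t) / (2 * (1 + Real.exp (φ t)) ^ 2)) * t * deriv φ t :=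
    funext fun t => (hdd t).deriv
  refine ⟨φ, ?_, by simp [φ, h0], by simp [hd, h0], fun t => (hdd t).deriv⟩
  have h2 : ContDiff ℝ 1 (deriv φ) := by
    rw [contDiff_one_iff_deriv]
    refine ⟨hφdd, ?_⟩
    rw [hdd']
    have c1 := hφd.continuous
    have c2 := hφdd.continuous
    refine ((Continuous.div (by fun_prop) (by fun_prop) ?_).mul continuous_id).mul c2
    intro t
    positivity
  rw [show (2 : WithTop ℕ∞) = 1 + 1 by norm_num, contDiff_succ_iff_deriv]
  exact ⟨hφd, by simp, h2⟩
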